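/- Let g ∈ C^{3k−1}(ℝ) with g(0) = g'(0) = 0, and define for u ∈ X^k(Q_T) the quantity ρ(u) = Σ_{m=0}^{k−1} ‖∂_t^m u|_{t=0}‖_{H^{3(k−m)}(I)}. Then there exists a nondecreasing function λ(ρ) such that whenever ρ(u), ρ(v) ≤ ρ, one has ‖∂_t^m (g(u) − g(v))_x|_{t=0}‖_{H^{3(k−m−1)}(I)} ≤ λ(ρ)·ρ(u − v) for every 0 ≤ m ≤ k−1. -/

import Mathlib

open MeasureTheory Set

/-- L² norm of a real function on the interval (a,b). -/
noncomputable def L2norm (f : ℝ → ℝ) (a b : ℝ) : ℝ :=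
  (∫ x in a..b, (f x) ^ 2) ^ ((1 : ℝ) / 2)

/-- H^s norm (sum of L² norms of derivatives up to order s) on (a,b). -/
noncomputable def Hnorm (s : ℕ) (f : ℝ → ℝ) (a b : ℝ) : ℝ :=
  ∑ j ∈ Finset.range (s + 1), L2norm (iteratedDeriv j f) a b

/-- `ρ(u) = Σ_{m=0}^{k−1} ‖∂_t^m u|_{t=0}‖_{H^{3(k−m)}(I)}`. -/
noncomputable def rhoQ (k : ℕ) (u : ℝ → ℝ → ℝ) (R : ℝ) : ℝ :=
  ∑ m ∈ Finset.range k,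
    Hnorm (3 * (k - m)) (fun x => iteratedDeriv m (fun t => u t x) 0) 0 R

/-- mixed derivative `∂_x^b ∂_t^a u (0,x)` -/
noncomputable def jetD (a b : ℕ) (u : ℝ → ℝ → ℝ) (x : ℝ) : ℝ :=
  iteratedDeriv b (fun y => iteratedDeriv a (fun t => u t y) 0) x

lemma contDiff_partial_t (F : ℝ → ℝ → ℝ) (n : ℕ)
    (h : ContDiff ℝ ((n + 1 : ℕ) : WithTop ℕ∞) (fun p : ℝ × ℝ => F p.1 p.2)) :
    ContDiff ℝ (n : WithTop ℕ∞) (fun p : ℝ × ℝ => deriv (fun t => F t p.2) p.1) := by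
  have h1 : ContDiff ℝ (n : WithTop ℕ∞) (fderiv ℝ (fun p : ℝ × ℝ => F p.1 p.2)) :=
    h.fderiv_right (by push_cast; exact le_rfl)
  have h2 : (fun p : ℝ × ℝ => deriv (fun t => F t p.2) p.1) =
      fun p => fderiv ℝ (fun p : ℝ × ℝ => F p.1 p.2) p ((1 : ℝ), (0 : ℝ)) := by
    funext p
    have hd : HasFDerivAt (fun p : ℝ × ℝ => F p.1 p.2)
        (fderiv ℝ (fun p : ℝ × ℝ => F p.1 p.2) (p.1, p.2)) (p.1, p.2) :=
      (h.differentiable (by simp) _).hasFDerivAt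
    have hc : HasDerivAt (fun t : ℝ => (t, p.2)) ((1 : ℝ), (0 : ℝ)) p.1 :=
      (hasDerivAt_id p.1).prodMk (hasDerivAt_const _ _)
    exact (hd.comp_hasDerivAt p.1 hc).deriv
  rw [h2]
  exact h1.clm_apply contDiff_const

lemma contDiff_iter_t (m : ℕ) : ∀ (F : ℝ → ℝ → ℝ) (n : ℕ),
    ContDiff ℝ ((n + m : ℕ) : WithTop ℕ∞) (fun p : ℝ × ℝ => F p.1 p.2) →
    ContDiff ℝ (n : WithTop ℕ∞) (fun p : ℝ × ℝ => iteratedDeriv m (fun t => F t p.2) p.1) := by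
  induction m with
  | zero => intro F n h; simpa using h
  | succ m ih =>
    intro F n h
    have h1 := contDiff_partial_t F (n + m) h
    have h2 := ih (fun t y => deriv (fun t => F t y) t) n h1
    simp only [iteratedDeriv_succ']
    exact h2

lemma contDiff_slice (m n : ℕ) (F : ℝ → ℝ → ℝ)
    (h : ContDiff ℝ ((n + m : ℕ) : WithTop ℕ∞) (fun p : ℝ × ℝ => F p.1 p.2)) :
    ContDiff ℝ (n : WithTop ℕ∞) (fun y : ℝ => iteratedDeriv m (fun t => F t y) 0) :=
  (contDiff_iter_t m F n h).comp (contDiff_const.prodMk contDiff_id)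

lemma contDiff_slice_t (n : WithTop ℕ∞) (F : ℝ → ℝ → ℝ)
    (h : ContDiff ℝ n (fun p : ℝ × ℝ => F p.1 p.2)) (y : ℝ) :
    ContDiff ℝ n (fun t : ℝ => F t y) :=
  h.comp (contDiff_id.prodMk contDiff_const)

lemma jetD_mul (m j : ℕ) (A B : ℝ → ℝ → ℝ)
    (hA : ContDiff ℝ ((j + m : ℕ) : WithTop ℕ∞) (fun p : ℝ × ℝ => A p.1 p.2))
    (hB : ContDiff ℝ ((j + m : ℕ) : WithTop ℕ∞) (fun p : ℝ × ℝ => B p.1 p.2)) (x : ℝ) :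
    jetD m j (fun t y => A t y * B t y) x =
      ∑ i ∈ Finset.range (m + 1), ∑ l ∈ Finset.range (j + 1),
        ((m.choose i : ℝ) * (j.choose l : ℝ)) * (jetD i l A x * jetD (m - i) (j - l) B x) := by
  have hle : ((m : ℕ) : WithTop ℕ∞) ≤ ((j + m : ℕ) : WithTop ℕ∞) := by
    exact_mod_cast Nat.le_add_left m j
  have h1 : (fun y => iteratedDeriv m (fun t => A t y * B t y) 0) = fun y =>
      ∑ i ∈ Finset.range (m + 1), (m.choose i : ℝ) *
        (iteratedDeriv i (fun t => A t y) 0 * iteratedDeriv (m - i) (fun t => B t y) 0) := by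
    funext y
    have := iteratedDeriv_mul (n := m) (x := (0 : ℝ))
      ((contDiff_slice_t _ A hA y).of_le hle).contDiffAt
      ((contDiff_slice_t _ B hB y).of_le hle).contDiffAt
    rw [show (fun t => A t y * B t y) = (fun t => A t y) * (fun t => B t y) from rfl, this]
    exact Finset.sum_congr rfl fun i _ => by ring
  have hsA : ∀ i ∈ Finset.range (m + 1),
      ContDiff ℝ (j : WithTop ℕ∞) (fun y => iteratedDeriv i (fun t => A t y) 0) := by
    intro i hi
    refine contDiff_slice i j A (hA.of_le ?_)
    have := Finset.mem_range.1 hi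
    exact_mod_cast (by omega : j + i ≤ j + m)
  have hsB : ∀ i ∈ Finset.range (m + 1),
      ContDiff ℝ (j : WithTop ℕ∞) (fun y => iteratedDeriv (m - i) (fun t => B t y) 0) := by
    intro i hi
    refine contDiff_slice (m - i) j B (hB.of_le ?_)
    exact_mod_cast (by omega : j + (m - i) ≤ j + m)
  unfold jetD
  rw [h1, iteratedDeriv_fun_sum
    (fun i hi => (contDiff_const.mul ((hsA i hi).mul (hsB i hi))).contDiffAt)]
  refine Finset.sum_congr rfl fun i hi => ?_
  rw [iteratedDeriv_const_mul_field]
  have := iteratedDeriv_mul (n := j) (x := x) (hsA i hi).contDiffAt (hsB i hi).contDiffAt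
  rw [show (fun y => iteratedDeriv i (fun t => A t y) 0 * iteratedDeriv (m - i) (fun t => B t y) 0)
    = (fun y => iteratedDeriv i (fun t => A t y) 0) *
      (fun y => iteratedDeriv (m - i) (fun t => B t y) 0) from rfl, this, Finset.mul_sum]
  exact Finset.sum_congr rfl fun l _ => by ring

lemma jetD_sub (m j : ℕ) (A B : ℝ → ℝ → ℝ)
    (hA : ContDiff ℝ ((j + m : ℕ) : WithTop ℕ∞) (fun p : ℝ × ℝ => A p.1 p.2))
    (hB : ContDiff ℝ ((j + m : ℕ) : WithTop ℕ∞) (fun p : ℝ × ℝ => B p.1 p.2)) (x : ℝ) :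
    jetD m j (fun t y => A t y - B t y) x = jetD m j A x - jetD m j B x := by
  have hle : ((m : ℕ) : WithTop ℕ∞) ≤ ((j + m : ℕ) : WithTop ℕ∞) := by
    exact_mod_cast Nat.le_add_left m j
  have h1 : (fun y => iteratedDeriv m (fun t => A t y - B t y) 0) =
      (fun y => iteratedDeriv m (fun t => A t y) 0) -
        (fun y => iteratedDeriv m (fun t => B t y) 0) := by
    funext y
    exact iteratedDeriv_sub ((contDiff_slice_t _ A hA y).of_le hle).contDiffAt
      ((contDiff_slice_t _ B hB y).of_le hle).contDiffAt
  unfold jetD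
  rw [h1]
  exact iteratedDeriv_sub (contDiff_slice m j A hA).contDiffAt (contDiff_slice m j B hB).contDiffAt

/-- smoothness -/
def SmoothU (u : ℝ → ℝ → ℝ) : Prop := ContDiff ℝ (⊤ : ℕ∞) (fun p : ℝ × ℝ => u p.1 p.2)

lemma SmoothU.nat {u : ℝ → ℝ → ℝ} (h : SmoothU u) (n : ℕ) :
    ContDiff ℝ (n : WithTop ℕ∞) (fun p : ℝ × ℝ => u p.1 p.2) :=
  ContDiff.of_le h (by exact_mod_cast le_top)

/-- Pointwise jets bounds -/
structure JetHyp (M : ℝ) (m j : ℕ) (u v : ℝ → ℝ → ℝ) (x δ : ℝ) : Prop where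
  bu : ∀ a ≤ m, ∀ b ≤ j, |jetD a b u x| ≤ M
  bv : ∀ a ≤ m, ∀ b ≤ j, |jetD a b v x| ≤ M
  bd : ∀ a ≤ m, ∀ b ≤ j, |jetD a b u x - jetD a b v x| ≤ δ

/-- a functional which is bounded and Lipschitz in terms of jets -/
def Good (M : ℝ) (m j : ℕ) (Φ : (ℝ → ℝ → ℝ) → ℝ → ℝ) : Prop :=
  ∃ L : ℝ, 0 ≤ L ∧ ∀ u v, SmoothU u → SmoothU v → ∀ x δ, 0 ≤ δ → JetHyp M m j u v x δ →
    |Φ u x| ≤ L ∧ |Φ v x| ≤ L ∧ |Φ u x - Φ v x| ≤ L * δ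

lemma Good.congr {M : ℝ} {m j : ℕ} {Φ Ψ : (ℝ → ℝ → ℝ) → ℝ → ℝ} (h : Good M m j Φ)
    (e : ∀ u, SmoothU u → ∀ x, Ψ u x = Φ u x) : Good M m j Ψ := by
  obtain ⟨L, hL, h⟩ := h
  refine ⟨L, hL, fun u v hu hv x δ hδ hy => ?_⟩
  rw [e u hu, e v hv]
  exact h u v hu hv x δ hδ hy

lemma Good.jet {M : ℝ} {m j a b : ℕ} (ha : a ≤ m) (hb : b ≤ j) :
    Good M m j (fun u x => jetD a b u x) := by
  refine ⟨max M 1, by positivity, fun u v hu hv x δ hδ hy => ⟨?_, ?_, ?_⟩⟩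
  · exact (hy.bu a ha b hb).trans (le_max_left _ _)
  · exact (hy.bv a ha b hb).trans (le_max_left _ _)
  · exact (hy.bd a ha b hb).trans (le_mul_of_one_le_left hδ (le_max_right _ _))

lemma Good.mul {M : ℝ} {m j : ℕ} {Φ Ψ : (ℝ → ℝ → ℝ) → ℝ → ℝ} (h : Good M m j Φ)
    (h' : Good M m j Ψ) : Good M m j (fun u x => Φ u x * Ψ u x) := by
  obtain ⟨L, hL, h⟩ := h
  obtain ⟨K, hK, h'⟩ := h'
  refine ⟨2 * (L * K), by positivity, fun u v hu hv x δ hδ hy => ?_⟩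
  obtain ⟨a1, a2, a3⟩ := h u v hu hv x δ hδ hy
  obtain ⟨b1, b2, b3⟩ := h' u v hu hv x δ hδ hy
  have hLK : 0 ≤ L * K := by positivity
  refine ⟨?_, ?_, ?_⟩
  · rw [abs_mul]
    have := mul_le_mul a1 b1 (abs_nonneg _) hL
    linarith
  · rw [abs_mul]
    have := mul_le_mul a2 b2 (abs_nonneg _) hL
    linarith
  · have e : Φ u x * Ψ u x - Φ v x * Ψ v x =
        (Φ u x - Φ v x) * Ψ u x + Φ v x * (Ψ u x - Ψ v x) := by ring
    rw [e]
    refine (abs_add_le _ _).trans ?_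
    rw [abs_mul, abs_mul]
    have c1 := mul_le_mul a3 b1 (abs_nonneg _) (by positivity)
    have c2 := mul_le_mul a2 b3 (abs_nonneg _) hL
    nlinarith

lemma Good.const_mul {M : ℝ} {m j : ℕ} {Φ : (ℝ → ℝ → ℝ) → ℝ → ℝ} (c : ℝ) (h : Good M m j Φ) :
    Good M m j (fun u x => c * Φ u x) := by
  refine Good.mul (Φ := fun _ _ => c) ⟨|c|, abs_nonneg c, fun u v hu hv x δ hδ hy =>
    ⟨le_rfl, le_rfl, ?_⟩⟩ h
  simp only [sub_self, abs_zero]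
  positivity

lemma Good.add {M : ℝ} {m j : ℕ} {Φ Ψ : (ℝ → ℝ → ℝ) → ℝ → ℝ} (h : Good M m j Φ)
    (h' : Good M m j Ψ) : Good M m j (fun u x => Φ u x + Ψ u x) := by
  obtain ⟨L, hL, h⟩ := h
  obtain ⟨K, hK, h'⟩ := h'
  refine ⟨L + K, by positivity, fun u v hu hv x δ hδ hy => ?_⟩
  obtain ⟨a1, a2, a3⟩ := h u v hu hv x δ hδ hy
  obtain ⟨b1, b2, b3⟩ := h' u v hu hv x δ hδ hy
  refine ⟨(abs_add_le _ _).trans (by linarith), (abs_add_le _ _).trans (by linarith), ?_⟩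
  have e : Φ u x + Ψ u x - (Φ v x + Ψ v x) = (Φ u x - Φ v x) + (Ψ u x - Ψ v x) := by ring
  rw [e]
  exact (abs_add_le _ _).trans (by linarith)

lemma Good.sum {M : ℝ} {m j : ℕ} {ι : Type} (s : Finset ι) (Φ : ι → (ℝ → ℝ → ℝ) → ℝ → ℝ)
    (h : ∀ i ∈ s, Good M m j (Φ i)) : Good M m j (fun u x => ∑ i ∈ s, Φ i u x) := by
  classical
  induction s using Finset.induction_on with
  | empty => exact ⟨0, le_rfl, fun u v hu hv x δ hδ hy => by simp⟩
  | insert a s ha ih =>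
    refine Good.congr (Good.add (h a (Finset.mem_insert_self _ _))
      (ih fun i hi => h i (Finset.mem_insert_of_mem hi))) fun u _ x => ?_
    rw [Finset.sum_insert ha]

lemma Good.base {M : ℝ} (m j : ℕ) (g : ℝ → ℝ) (hg : ContDiff ℝ 1 g) :
    Good M m j (fun u x => jetD 0 0 (fun t y => g (u t y)) x) := by
  obtain ⟨C, hC⟩ := (isCompact_Icc (a := -M) (b := M)).exists_bound_of_continuousOn
    hg.continuous.continuousOn
  obtain ⟨K, hK⟩ := (isCompact_Icc (a := -M) (b := M)).exists_bound_of_continuousOn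
    (hg.continuous_deriv le_rfl).continuousOn
  refine ⟨max 0 (max C K), le_max_left _ _, fun u v hu hv x δ hδ hy => ?_⟩
  have h1 := hy.bu 0 (Nat.zero_le _) 0 (Nat.zero_le _)
  have h2 := hy.bv 0 (Nat.zero_le _) 0 (Nat.zero_le _)
  have h3 := hy.bd 0 (Nat.zero_le _) 0 (Nat.zero_le _)
  simp only [jetD, iteratedDeriv_zero] at h1 h2 h3 ⊢
  have m1 : u 0 x ∈ Icc (-M) M := abs_le.1 h1
  have m2 : v 0 x ∈ Icc (-M) M := abs_le.1 h2
  refine ⟨(hC _ m1).trans ?_, (hC _ m2).trans ?_, ?_⟩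
  · exact (le_max_left _ _).trans (le_max_right _ _)
  · exact (le_max_left _ _).trans (le_max_right _ _)
  · have := Convex.norm_image_sub_le_of_norm_deriv_le (f := g) (C := K) (s := Icc (-M) M)
      (fun z _ => (hg.differentiable (by simp)) z) hK (convex_Icc _ _) m2 m1
    have hK' : K ≤ max 0 (max C K) := (le_max_right _ _).trans (le_max_right _ _)
    refine this.trans ?_
    exact mul_le_mul hK' h3 (norm_nonneg _) (le_max_left _ _)

lemma jetD_comp_succ_t (m j : ℕ) (g : ℝ → ℝ) (hg : Differentiable ℝ g) (u : ℝ → ℝ → ℝ)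
    (hu : SmoothU u) (x : ℝ) :
    jetD (m + 1) j (fun t y => g (u t y)) x =
      jetD m j (fun t y => deriv g (u t y) * deriv (fun s => u s y) t) x := by
  unfold jetD
  simp only [iteratedDeriv_succ']
  congr 1
  funext y
  congr 1
  funext t
  have h1 : DifferentiableAt ℝ (fun s => u s y) t :=
    (contDiff_slice_t _ u (hu.nat 1) y).differentiable (by simp) t
  exact deriv_comp (h₂ := g) t (hg _) h1

lemma jetD_comp_succ_x (j : ℕ) (g : ℝ → ℝ) (hg : Differentiable ℝ g) (u : ℝ → ℝ → ℝ)
    (hu : SmoothU u) (x : ℝ) :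
    jetD 0 (j + 1) (fun t y => g (u t y)) x =
      jetD 0 j (fun t y => deriv g (u t y) * deriv (fun z => u t z) y) x := by
  unfold jetD
  simp only [iteratedDeriv_succ', iteratedDeriv_zero]
  congr 1
  funext y
  have h1 : DifferentiableAt ℝ (fun s => u 0 s) y := by
    have : ContDiff ℝ 1 (fun s => u 0 s) :=
      (hu.nat 1).comp (contDiff_const.prodMk contDiff_id)
    exact this.differentiable (by simp) y
  exact deriv_comp (h₂ := g) y (hg _) h1

lemma contDiff_comp_u (n : ℕ) (g : ℝ → ℝ) (hg : ContDiff ℝ (n : WithTop ℕ∞) g) (u : ℝ → ℝ → ℝ)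
    (hu : SmoothU u) :
    ContDiff ℝ (n : WithTop ℕ∞) (fun p : ℝ × ℝ => g (u p.1 p.2)) :=
  hg.comp (hu.nat n)

lemma contDiff_partial_x (F : ℝ → ℝ → ℝ) (n : ℕ)
    (h : ContDiff ℝ ((n + 1 : ℕ) : WithTop ℕ∞) (fun p : ℝ × ℝ => F p.1 p.2)) :
    ContDiff ℝ (n : WithTop ℕ∞) (fun p : ℝ × ℝ => deriv (fun z => F p.1 z) p.2) := by
  have h1 : ContDiff ℝ ((n + 1 : ℕ) : WithTop ℕ∞) (fun p : ℝ × ℝ => F p.2 p.1) :=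
    h.comp (contDiff_snd.prodMk contDiff_fst)
  exact (contDiff_partial_t (fun z t => F t z) n h1).comp (contDiff_snd.prodMk contDiff_fst)

lemma deriv_contDiff_nat (n : ℕ) (g : ℝ → ℝ) (hg : ContDiff ℝ ((n + 1 : ℕ) : WithTop ℕ∞) g) :
    ContDiff ℝ (n : WithTop ℕ∞) (deriv g) := by
  have : ContDiff ℝ ((n : WithTop ℕ∞) + 1) g := by exact_mod_cast hg
  exact (contDiff_succ_iff_deriv.1 this).2.2

lemma ContDiff.natLe {n n' : ℕ} {g : ℝ → ℝ} (hg : ContDiff ℝ (n : WithTop ℕ∞) g) (h : n' ≤ n) :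
    ContDiff ℝ (n' : WithTop ℕ∞) g := hg.of_le (by exact_mod_cast h)

lemma Good.main_x (M : ℝ) (m0 j0 : ℕ) : ∀ (j : ℕ), j ≤ j0 → ∀ g : ℝ → ℝ,
    ContDiff ℝ ((j + 1 : ℕ) : WithTop ℕ∞) g →
    Good M m0 j0 (fun u x => jetD 0 j (fun t y => g (u t y)) x) := by
  intro j
  induction j using Nat.strong_induction_on with
  | _ j ih =>
  intro hj g hg
  rcases j with _ | j
  · exact Good.base m0 j0 g (by exact_mod_cast hg)
  have hgd := deriv_contDiff_nat _ g hg
  refine Good.congr (Φ := fun u x => ∑ i ∈ Finset.range (0 + 1), ∑ l ∈ Finset.range (j + 1),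
        (((0 : ℕ).choose i : ℝ) * (j.choose l : ℝ)) *
        (jetD 0 l (fun t y => deriv g (u t y)) x * jetD 0 (j - l + 1) u x)) ?_ ?_
  · refine Good.sum _ _ fun i _ => Good.sum _ _ fun l hl => Good.const_mul _ (Good.mul ?_ ?_)
    · have := Finset.mem_range.1 hl
      exact ih l (by omega) (by omega) _ (hgd.natLe (by omega))
    · exact Good.jet (Nat.zero_le _) (by omega)
  · intro u hu x
    rw [jetD_comp_succ_x j g (hg.differentiable (by simp)) u hu x,
      jetD_mul 0 j (fun t y => deriv g (u t y)) (fun t y => deriv (fun z => u t z) y)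
        (contDiff_comp_u _ _ (hgd.natLe (by omega)) u hu)
        (contDiff_partial_x u _ (hu.nat _)) x]
    refine Finset.sum_congr rfl fun i hi => Finset.sum_congr rfl fun l _ => ?_
    have hi0 : i = 0 := by simpa using hi
    subst hi0
    simp only [jetD, iteratedDeriv_succ', iteratedDeriv_zero, Nat.sub_zero]

lemma Good.main (M : ℝ) (m0 j0 : ℕ) : ∀ (m : ℕ), m ≤ m0 → ∀ j : ℕ, j ≤ j0 → ∀ g : ℝ → ℝ,
    ContDiff ℝ ((m + j + 1 : ℕ) : WithTop ℕ∞) g →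
    Good M m0 j0 (fun u x => jetD m j (fun t y => g (u t y)) x) := by
  intro m
  induction m using Nat.strong_induction_on with
  | _ m ih =>
  intro hm j hj g hg
  rcases m with _ | m
  · exact Good.main_x M m0 j0 j hj g (hg.natLe (by omega))
  have hgd := deriv_contDiff_nat _ g hg
  refine Good.congr (Φ := fun u x => ∑ i ∈ Finset.range (m + 1), ∑ l ∈ Finset.range (j + 1),
        ((m.choose i : ℝ) * (j.choose l : ℝ)) *
        (jetD i l (fun t y => deriv g (u t y)) x * jetD (m - i + 1) (j - l) u x)) ?_ ?_
  · refine Good.sum _ _ fun i hi => Good.sum _ _ fun l hl => Good.const_mul _ (Good.mul ?_ ?_)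
    · have := Finset.mem_range.1 hl
      have := Finset.mem_range.1 hi
      exact ih i (by omega) (by omega) l (by omega) _ (hgd.natLe (by omega))
    · exact Good.jet (by omega) (by omega)
  · intro u hu x
    rw [jetD_comp_succ_t m j g (hg.differentiable (by simp)) u hu x,
      jetD_mul m j (fun t y => deriv g (u t y)) (fun t y => deriv (fun s => u s y) t)
        (contDiff_comp_u _ _ (hgd.natLe (by omega)) u hu)
        (contDiff_partial_t u _ (hu.nat _)) x]
    refine Finset.sum_congr rfl fun i hi => Finset.sum_congr rfl fun l _ => ?_
    simp only [jetD, iteratedDeriv_succ']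

lemma L2norm_eq (f : ℝ → ℝ) (a b : ℝ) : L2norm f a b = √(∫ x in a..b, (f x) ^ 2) := by
  rw [L2norm, Real.sqrt_eq_rpow]

lemma L2norm_nonneg (f : ℝ → ℝ) (a b : ℝ) : 0 ≤ L2norm f a b := by
  rw [L2norm_eq]; exact Real.sqrt_nonneg _

lemma Hnorm_nonneg (s : ℕ) (f : ℝ → ℝ) (a b : ℝ) : 0 ≤ Hnorm s f a b :=
  Finset.sum_nonneg fun _ _ => L2norm_nonneg _ _ _

lemma rhoQ_nonneg (k : ℕ) (u : ℝ → ℝ → ℝ) (R : ℝ) : 0 ≤ rhoQ k u R :=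
  Finset.sum_nonneg fun _ _ => Hnorm_nonneg _ _ _ _

lemma L2norm_le_of_bound (f : ℝ → ℝ) (R B : ℝ) (hR : 0 < R) (hB : 0 ≤ B)
    (h : ∀ x ∈ Icc 0 R, |f x| ≤ B) : L2norm f 0 R ≤ √R * B := by
  rw [L2norm_eq]
  refine Real.sqrt_le_iff.2 ⟨by positivity, ?_⟩
  rw [mul_pow, Real.sq_sqrt hR.le]
  have := intervalIntegral.norm_integral_le_of_norm_le_const (a := (0 : ℝ)) (b := R)
    (f := fun x => (f x) ^ 2) (C := B ^ 2) (by
      intro x hx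
      rw [uIoc_of_le hR.le] at hx
      rw [Real.norm_eq_abs, abs_pow]
      exact pow_le_pow_left₀ (abs_nonneg _) (h x ⟨hx.1.le, hx.2⟩) 2)
  rw [sub_zero, abs_of_pos hR] at this
  linarith [(le_abs_self _).trans this]

lemma sobolev_aux (f : ℝ → ℝ) (R : ℝ) (hR : 0 < R) (hf : ContDiff ℝ 1 f) (x : ℝ)
    (hx : x ∈ Icc 0 R) :
    |f x| ≤ √(1 / R + 1) * (L2norm f 0 R + L2norm (deriv f) 0 R) := by
  have hc : Continuous f := hf.continuous
  have hc' : Continuous (deriv f) := hf.continuous_deriv le_rfl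
  obtain ⟨y, hy, hmin⟩ := (isCompact_Icc (a := (0 : ℝ)) (b := R)).exists_isMinOn
    ⟨0, by simp [hR.le]⟩ (f := fun z => (f z) ^ 2) (hc.pow 2).continuousOn
  set P := ∫ z in (0 : ℝ)..R, (f z) ^ 2 with hP
  set Q := ∫ z in (0 : ℝ)..R, (deriv f z) ^ 2 with hQ
  have hP0 : 0 ≤ P := intervalIntegral.integral_nonneg hR.le fun z _ => sq_nonneg _
  have hQ0 : 0 ≤ Q := intervalIntegral.integral_nonneg hR.le fun z _ => sq_nonneg _
  have h1 : R * (f y) ^ 2 ≤ P := by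
    have := intervalIntegral.integral_mono_on (a := (0 : ℝ)) (b := R) (μ := volume)
      (f := fun _ => (f y) ^ 2) (g := fun z => (f z) ^ 2) hR.le (by simp)
      ((hc.pow 2).intervalIntegrable _ _) (fun z hz => hmin hz)
    simpa using this
  have h2 : ∫ z in y..x, 2 * f z * deriv f z = (f x) ^ 2 - (f y) ^ 2 := by
    refine intervalIntegral.integral_eq_sub_of_hasDerivAt (f := fun z => (f z) ^ 2) (fun z _ => ?_)
      (((continuous_const.mul hc).mul hc').intervalIntegrable _ _)
    have := ((hf.differentiable (by simp) z).hasDerivAt).pow 2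
    have e2 : ((2 : ℕ) : ℝ) * f z ^ (2 - 1) * deriv f z = 2 * f z * deriv f z := by norm_num
    rw [e2] at this
    exact this
  have hI : ∀ a b : ℝ, IntervalIntegrable (fun z => (f z) ^ 2 + (deriv f z) ^ 2) volume a b :=
    fun a b => ((hc.pow 2).add (hc'.pow 2)).intervalIntegrable _ _
  have h3 : |∫ z in y..x, 2 * f z * deriv f z| ≤ P + Q := by
    have e : P + Q = ∫ z in (0 : ℝ)..R, ((f z) ^ 2 + (deriv f z) ^ 2) := by
      exact (intervalIntegral.integral_add (f := fun z => (f z) ^ 2)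
        (g := fun z => (deriv f z) ^ 2) ((hc.pow 2).intervalIntegrable _ _)
        ((hc'.pow 2).intervalIntegrable _ _)).symm
    rw [e, intervalIntegral.integral_of_le hR.le, ← Real.norm_eq_abs]
    refine (intervalIntegral.norm_integral_le_integral_norm_uIoc).trans ?_
    have hsub : uIoc y x ⊆ Ioc 0 R := by
      intro z hz
      rw [mem_uIoc] at hz
      rcases hz with hz | hz
      · exact ⟨hy.1.trans_lt hz.1, hz.2.trans hx.2⟩
      · exact ⟨hx.1.trans_lt hz.1, hz.2.trans hy.2⟩
    have hI' := (intervalIntegrable_iff_integrableOn_Ioc_of_le hR.le).1 (hI 0 R)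
    refine (setIntegral_mono (μ := volume) (s := uIoc y x)
      (g := fun z => (f z) ^ 2 + (deriv f z) ^ 2) ?_ (hI'.mono_set hsub) ?_).trans ?_
    · exact (((continuous_const.mul hc).mul hc').norm.intervalIntegrable y x).def'
    · intro z
      simp only [Real.norm_eq_abs]
      refine abs_le.2 ⟨?_, ?_⟩
      · nlinarith [sq_nonneg (f z + deriv f z)]
      · nlinarith [sq_nonneg (f z - deriv f z)]
    · exact setIntegral_mono_set hI' (Filter.Eventually.of_forall fun z => by positivity)
        hsub.eventuallyLE
  have h4 : (f x) ^ 2 ≤ (1 / R + 1) * (P + Q) := by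
    have h5 : (f y) ^ 2 ≤ 1 / R * P := by
      rw [one_div, ← div_eq_inv_mul, le_div_iff₀ hR]; linarith
    have h6 : 0 ≤ 1 / R * Q := by positivity
    rw [h2] at h3
    nlinarith [(le_abs_self _).trans h3]
  rw [L2norm_eq, L2norm_eq, ← hP, ← hQ]
  refine abs_le_of_sq_le_sq ?_ (by positivity)
  rw [mul_pow, Real.sq_sqrt (by positivity)]
  refine h4.trans (mul_le_mul_of_nonneg_left ?_ (by positivity))
  nlinarith [Real.sq_sqrt hP0, Real.sq_sqrt hQ0, Real.sqrt_nonneg P, Real.sqrt_nonneg Q,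
    mul_nonneg (Real.sqrt_nonneg P) (Real.sqrt_nonneg Q)]

lemma L2_le_rhoQ (k : ℕ) (u : ℝ → ℝ → ℝ) (R : ℝ) (a b : ℕ) (ha : a < k) (hb : b ≤ 3 * (k - a)) :
    L2norm (jetD a b u) 0 R ≤ rhoQ k u R := by
  have h1 : L2norm (jetD a b u) 0 R ≤
      Hnorm (3 * (k - a)) (fun x => iteratedDeriv a (fun t => u t x) 0) 0 R :=
    Finset.single_le_sum (f := fun j => L2norm (iteratedDeriv j
      (fun x => iteratedDeriv a (fun t => u t x) 0)) 0 R)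
      (fun _ _ => L2norm_nonneg _ _ _) (Finset.mem_range.2 (by omega))
  refine h1.trans ?_
  exact Finset.single_le_sum (f := fun m =>
      Hnorm (3 * (k - m)) (fun x => iteratedDeriv m (fun t => u t x) 0) 0 R)
      (fun _ _ => Hnorm_nonneg _ _ _ _) (Finset.mem_range.2 ha)

lemma jet_le_rhoQ (k : ℕ) (u : ℝ → ℝ → ℝ) (hu : SmoothU u) (R : ℝ) (hR : 0 < R) (a b : ℕ)
    (ha : a < k) (hb : b + 1 ≤ 3 * (k - a)) (x : ℝ) (hx : x ∈ Icc 0 R) :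
    |jetD a b u x| ≤ (√(1 / R + 1) * 2) * rhoQ k u R := by
  have hs : ContDiff ℝ ((1 + b : ℕ) : WithTop ℕ∞)
      (fun y => iteratedDeriv a (fun t => u t y) 0) := contDiff_slice a (1 + b) u (hu.nat _)
  have hc : ContDiff ℝ 1 (jetD a b u) := by
    have := (contDiff_nat_succ_iff_contDiff_one_iteratedDeriv
      (f := (fun y => iteratedDeriv a (fun t => u t y) 0)) (n := b)).1 (by rwa [add_comm] at hs)
    first | exact this | exact this.2
  have h := sobolev_aux (jetD a b u) R hR hc x hx
  have e : deriv (jetD a b u) = jetD a (b + 1) u := by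
    funext z
    show deriv (iteratedDeriv b _) z = iteratedDeriv (b + 1) _ z
    rw [iteratedDeriv_succ]
  rw [e] at h
  have h1 := L2_le_rhoQ k u R a b ha (by omega)
  have h2 := L2_le_rhoQ k u R a (b + 1) ha hb
  have h3 : 0 ≤ √(1 / R + 1) := Real.sqrt_nonneg _
  nlinarith

/-- Lemma 2.3: for `g ∈ C^{3k−1}` with `g(0)=g'(0)=0` there is a
nondecreasing `λ` such that whenever `ρ(u), ρ(v) ≤ ρ`,
`‖∂_t^m (g(u) − g(v))_x|_{t=0}‖_{H^{3(k−m−1)}(I)} ≤ λ(ρ)·ρ(u − v)` for `m ≤ k−1`. -/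
theorem trace_nonlinear_estimate (R T : ℝ) (hR : 0 < R) (hT : 0 < T)
    (k : ℕ) (hk : 1 ≤ k)
    (g : ℝ → ℝ) (hg : ContDiff ℝ (3 * k - 1) g)
    (hg0 : g 0 = 0) (hg'0 : deriv g 0 = 0) :
    ∃ lam : ℝ → ℝ, Monotone lam ∧
      ∀ ρ : ℝ, 0 < ρ → ∀ u v : ℝ → ℝ → ℝ,
        ContDiff ℝ (⊤ : ℕ∞) (fun p : ℝ × ℝ => u p.1 p.2) →
        ContDiff ℝ (⊤ : ℕ∞) (fun p : ℝ × ℝ => v p.1 p.2) →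
        rhoQ k u R ≤ ρ → rhoQ k v R ≤ ρ →
        ∀ m : ℕ, m ≤ k - 1 →
          Hnorm (3 * (k - m - 1))
              (fun x => deriv
                (fun y => iteratedDeriv m (fun t => g (u t y) - g (v t y)) 0) x) 0 R
            ≤ lam ρ * rhoQ k (fun t x => u t x - v t x) R := by
  classical
  have hgN : ContDiff ℝ ((3 * k - 1 : ℕ) : WithTop ℕ∞) g := by
    refine hg.of_le ?_
    obtain ⟨n, hn⟩ : ∃ n, 3 * k = n + 1 := ⟨3 * k - 1, by omega⟩
    have e : (3 * (k : WithTop ℕ∞) - 1) = ((3 * k : ℕ) : WithTop ℕ∞) - ((1 : ℕ) : WithTop ℕ∞) := by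
      push_cast; rfl
    rw [e]
    exact le_of_eq rfl
  set C : ℝ := √(1 / R + 1) * 2 with hC
  have hC0 : 0 ≤ C := by positivity
  have key : ∀ n m j : ℕ, ∃ L : ℝ, 0 ≤ L ∧ (m < k → j ≤ 3 * (k - m - 1) →
      ∀ u v, SmoothU u → SmoothU v → ∀ x δ, 0 ≤ δ →
      JetHyp (C * n) m (3 * (k - m - 1) + 1) u v x δ →
      |jetD m (j + 1) (fun t y => g (u t y)) x - jetD m (j + 1) (fun t y => g (v t y)) x|
        ≤ L * δ) := by
    intro n m j
    by_cases h : m < k ∧ j ≤ 3 * (k - m - 1)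
    · obtain ⟨L, hL, hh⟩ := Good.main (C * n) m (3 * (k - m - 1) + 1) m le_rfl (j + 1)
        (by omega) g (hgN.natLe (by omega))
      exact ⟨L, hL, fun _ _ u v hu hv x δ hδ hy => (hh u v hu hv x δ hδ hy).2.2⟩
    · exact ⟨0, le_rfl, fun h1 h2 => absurd ⟨h1, h2⟩ h⟩
  choose L hL0 hL using key
  let S : ℕ → ℝ := fun n => ∑ m ∈ Finset.range k, ∑ j ∈ Finset.range (3 * (k - m - 1) + 1),
    √R * (L n m j * C)
  have hterm : ∀ n m j, 0 ≤ √R * (L n m j * C) := fun n m j =>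
    mul_nonneg (Real.sqrt_nonneg _) (mul_nonneg (hL0 n m j) hC0)
  have hS0 : ∀ n, 0 ≤ S n := fun n => Finset.sum_nonneg fun m _ => Finset.sum_nonneg fun j _ =>
    hterm n m j
  refine ⟨fun ρ => ∑ n ∈ Finset.range (⌈ρ⌉₊ + 1), S n, ?_, ?_⟩
  · intro a b hab
    refine Finset.sum_le_sum_of_subset_of_nonneg ?_ fun n _ _ => hS0 n
    exact Finset.range_mono (Nat.add_le_add_right (Nat.ceil_mono hab) 1)
  intro ρ hρ u v hu hv hρu hρv m hm
  have hmk : m < k := by omega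
  replace hu : SmoothU u := hu
  replace hv : SmoothU v := hv
  have hw : SmoothU (fun t x => u t x - v t x) := ContDiff.sub hu hv
  set r := rhoQ k (fun t x => u t x - v t x) R with hr
  have hr0 : 0 ≤ r := rhoQ_nonneg _ _ _
  have hρn : ρ ≤ (⌈ρ⌉₊ : ℝ) := Nat.le_ceil ρ
  have hyp : ∀ x ∈ Icc 0 R, JetHyp (C * (⌈ρ⌉₊ : ℝ)) m (3 * (k - m - 1) + 1) u v x (C * r) := by
    intro x hx
    refine ⟨fun a ha b hb => ?_, fun a ha b hb => ?_, fun a ha b hb => ?_⟩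
    · exact (jet_le_rhoQ k u hu R hR a b (by omega) (by omega) x hx).trans
        (mul_le_mul_of_nonneg_left (hρu.trans hρn) hC0)
    · exact (jet_le_rhoQ k v hv R hR a b (by omega) (by omega) x hx).trans
        (mul_le_mul_of_nonneg_left (hρv.trans hρn) hC0)
    · rw [← jetD_sub a b u v (hu.nat _) (hv.nat _) x]
      exact jet_le_rhoQ k _ hw R hR a b (by omega) (by omega) x hx
  have step : Hnorm (3 * (k - m - 1))
      (fun x => deriv (fun y => iteratedDeriv m (fun t => g (u t y) - g (v t y)) 0) x) 0 R
      ≤ ∑ j ∈ Finset.range (3 * (k - m - 1) + 1), √R * (L ⌈ρ⌉₊ m j * C) * r := by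
    refine Finset.sum_le_sum fun j hj => ?_
    have hj' := Finset.mem_range.1 hj
    refine (L2norm_le_of_bound _ R (L ⌈ρ⌉₊ m j * (C * r)) hR
      (mul_nonneg (hL0 _ _ _) (mul_nonneg hC0 hr0)) fun x hx => ?_).trans (le_of_eq (by ring))
    have e : iteratedDeriv j
        (fun x => deriv (fun y => iteratedDeriv m (fun t => g (u t y) - g (v t y)) 0) x) x
        = jetD m (j + 1) (fun t y => g (u t y) - g (v t y)) x := by
      rw [jetD, iteratedDeriv_succ']
    rw [e, jetD_sub m (j + 1) (fun t y => g (u t y)) (fun t y => g (v t y))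
      (contDiff_comp_u _ g (hgN.natLe (by omega)) u hu)
      (contDiff_comp_u _ g (hgN.natLe (by omega)) v hv) x]
    exact hL ⌈ρ⌉₊ m j hmk (by omega) u v hu hv x (C * r) (mul_nonneg hC0 hr0) (hyp x hx)
  refine step.trans ?_
  rw [← Finset.sum_mul]
  refine mul_le_mul_of_nonneg_right ?_ hr0
  refine le_trans ?_ (Finset.single_le_sum (f := S) (fun n _ => hS0 n)
    (Finset.mem_range.2 (Nat.lt_succ_self ⌈ρ⌉₊)))
  exact Finset.single_le_sum (f := fun m => ∑ j ∈ Finset.range (3 * (k - m - 1) + 1),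
    √R * (L ⌈ρ⌉₊ m j * C)) (fun m _ => Finset.sum_nonneg fun j _ => hterm _ m j)
    (Finset.mem_range.2 hmk)
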